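/- Let a ∈ ℝ, let I be an interval with least element a, nonempty interior, and I ⊂ [a,∞), let m ∈ ℕ*, let α = (α₁,…,α_m) ∈ (0,1]^m, let q_a ∈ ℝ^m, and let A : I → ℝ^{m×m}, B : I → ℝ^m be locally essentially bounded. Suppose _cZ satisfies the left Caputo state-transition integral equation: for every s, t ∈ I with s ≤ t and all i, j, _cZ_{ij}(t,s) = δ_{ij} + (1/Γ(α_i)) ∫_s^t (t−τ)^{α_i−1} (A(τ) _cZ(τ,s))_{ij} dτ. Then the function q₂ defined for every t ∈ I by q₂(t) := _cZ(t,a)·q_a + ∫_a^t _cZ(t,s)·B(s) ds satisfies, for every t ∈ I and every i ∈ {1,…,m}, (q₂)_i(t) = (q_a)_i + (1/Γ(α_i)) ∫_a^t (t−τ)^{α_i−1} ( A(τ)·q₂(τ) + I^{1−α}_{a+}[B](τ) )_i dτ, where (I^{1−α}_{a+}[B])_i := I^{1−α_i}_{a+}[B_i]; equivalently, q₂ is the unique global solution of the Caputo Cauchy problem _cD^{α_i}_{a+}[q_i] = (A q)_i + I^{1−α_i}_{a+}[B_i] a.e. on I with q(a) = q_a. -/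

import Mathlib

open MeasureTheory Set

/-- Left Riemann–Liouville fractional integral of order `α` with base point `a`
(for `α = 0` it is the identity). -/
noncomputable def rlInt (a α : ℝ) (q : ℝ → ℝ) (t : ℝ) : ℝ :=
  if α = 0 then q t else (1 / Real.Gamma α) * ∫ τ in a..t, (t - τ) ^ (α - 1) * q τ

/-- `q` is a global solution on `I` of the Caputo Cauchy problem
`_cD^{α_i}_{a+}[q_i] = F_i(q(·),·)` a.e. on `I`, `q(a) = qa`. -/
def IsCaputoSol (a : ℝ) (I : Set ℝ) {m : ℕ} (α : Fin m → ℝ) (qa : Fin m → ℝ)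
    (F : (Fin m → ℝ) → ℝ → Fin m → ℝ) (q : ℝ → Fin m → ℝ) : Prop :=
  ContinuousOn q I ∧ q a = qa ∧
  ∀ i, ∃ c : ℝ, ∃ h : ℝ → ℝ,
    (∀ b ∈ I, MeasureTheory.IntegrableOn h (Set.Icc a b)) ∧
    (∀ᵐ t ∂(MeasureTheory.volume.restrict I),
      rlInt a (1 - α i) (fun τ => q τ i - qa i) t = c + ∫ τ in a..t, h τ) ∧
    (∀ᵐ t ∂(MeasureTheory.volume.restrict I), h t = F (q t) t i)

/-!
The Beta integral and Fubini give the semigroup law `I^α I^β = I^{α+β}`. As `I^α I^{1-α}` is then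
the ordinary primitive, the Caputo problem is equivalent to the Volterra equation
`q = q(a) + I^α[F(q)]`.

For `F(x, t) = A(t) x + g(t)`, weighting by `exp (-r (t - s))` with `r` large makes the integral
operator a contraction. The resulting Gronwall bound is uniform in `s`: it bounds the
state-transition matrix `Z` on the triangle `s ≤ t`, and it proves uniqueness.

Put `P(t) = ∫_a^t Z(t, s) B(s) ds`. Inserting the equation of `Z(·, s)` and exchanging the order of
integration, which the bound on `Z` justifies, gives
`P(t) = ∫_a^t B + I^α[A P](t) = I^α[A P + I^{1-α} B](t)`.
So `P` solves the inhomogeneous equation with zero initial value, and `Z(·, a) q_a` solves the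
homogeneous one with initial value `q_a`.
-/

open scoped ENNReal Matrix

section Kernel

variable {α β : ℝ}

lemma intervalIntegrable_sub_rpow (hα : 0 < α) (a b t : ℝ) :
    IntervalIntegrable (fun τ => (t - τ) ^ (α - 1)) volume a b := by
  simpa using (intervalIntegral.intervalIntegrable_rpow' (a := t - a) (b := t - b)
    (r := α - 1) (by linarith)).comp_sub_left t

lemma integral_sub_rpow (hα : 0 < α) (a b t : ℝ) :
    ∫ τ in a..b, (t - τ) ^ (α - 1) = ((t - a) ^ α - (t - b) ^ α) / α := by
  rw [intervalIntegral.integral_comp_sub_left (fun x => x ^ (α - 1)) t,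
    integral_rpow (Or.inl (by linarith)), sub_add_cancel]

lemma integral_sub_rpow_mul_rpow_sub (hα : 0 < α) (hβ : 0 < β) {s t : ℝ} (hst : s < t) :
    ∫ τ in s..t, (t - τ) ^ (α - 1) * (τ - s) ^ (β - 1)
      = Real.Gamma α * Real.Gamma β / Real.Gamma (α + β) * (t - s) ^ (α + β - 1) := by
  have hts : 0 < t - s := sub_pos.2 hst
  have translate : ∫ τ in s..t, (t - τ) ^ (α - 1) * (τ - s) ^ (β - 1)
      = ∫ x in (0 : ℝ)..(t - s), x ^ (β - 1) * ((t - s) - x) ^ (α - 1) := by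
    rw [← sub_self s, ← intervalIntegral.integral_comp_sub_right
      (fun x => x ^ (β - 1) * ((t - s) - x) ^ (α - 1)) s]
    simp only [sub_sub_sub_cancel_right, mul_comm]
  have to_complex : ((∫ x in (0 : ℝ)..(t - s), x ^ (β - 1) * ((t - s) - x) ^ (α - 1) : ℝ) : ℂ)
      = ∫ x in (0 : ℝ)..(t - s),
          (x : ℂ) ^ ((β : ℂ) - 1) * (((t - s : ℝ) : ℂ) - x) ^ ((α : ℂ) - 1) := by
    rw [← intervalIntegral.integral_ofReal]
    refine intervalIntegral.integral_congr fun x hx => ?_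
    rw [uIcc_of_le hts.le] at hx
    simp only [Complex.ofReal_mul, Complex.ofReal_cpow hx.1,
      Complex.ofReal_cpow (sub_nonneg.2 hx.2), Complex.ofReal_sub, Complex.ofReal_one]
  rw [translate]
  apply Complex.ofReal_injective
  rw [to_complex, Complex.betaIntegral_scaled _ _ hts,
    Complex.betaIntegral_eq_Gamma_mul_div _ _ (by simpa) (by simpa), add_comm (β : ℂ)]
  push_cast [Complex.ofReal_cpow hts.le, ← Complex.Gamma_ofReal]
  ring

lemma intervalIntegrable_sub_rpow_mul_rpow_sub (hα : 0 < α) (hβ : 0 < β) {s t : ℝ}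
    (hst : s < t) :
    IntervalIntegrable (fun τ => (t - τ) ^ (α - 1) * (τ - s) ^ (β - 1)) volume s t := by
  refine intervalIntegral.intervalIntegrable_of_integral_ne_zero ?_
  rw [integral_sub_rpow_mul_rpow_sub hα hβ hst]
  have := Real.Gamma_pos_of_pos hα
  have := Real.Gamma_pos_of_pos hβ
  have := Real.Gamma_pos_of_pos (add_pos hα hβ)
  have := sub_pos.2 hst
  positivity

lemma integral_sub_rpow_mul_exp_le (hα : 0 < α) {r : ℝ} (hr : 0 < r) {s t : ℝ} (hst : s ≤ t) :
    ∫ τ in s..t, (t - τ) ^ (α - 1) * Real.exp (-(r * (t - τ))) ≤ (1 / r) ^ α * Real.Gamma α := by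
  rw [intervalIntegral.integral_comp_sub_left (fun x => x ^ (α - 1) * Real.exp (-(r * x))) t,
    ← Real.integral_rpow_mul_exp_neg_mul_Ioi hα hr, sub_self,
    intervalIntegral.integral_of_le (sub_nonneg.2 hst)]
  refine setIntegral_mono_set ?_ ?_ Ioc_subset_Ioi_self.eventuallyLE
  · refine not_imp_comm.1 integral_undef ?_
    rw [Real.integral_rpow_mul_exp_neg_mul_Ioi hα hr]
    have := Real.Gamma_pos_of_pos hα
    positivity
  · filter_upwards [ae_restrict_mem measurableSet_Ioi] with x hx
    exact mul_nonneg (Real.rpow_nonneg (mem_Ioi.1 hx).le _) (Real.exp_pos _).le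

end Kernel

section Fubini

variable {E : Type*} [NormedAddCommGroup E]

lemma Ioc_inter_Ici_of_lt {R : Type*} [LinearOrder R] {a s t : R} (has : a < s) :
    Ioc a t ∩ Ici s = Icc s t := by
  ext x
  exact ⟨fun h => ⟨h.2, h.1.2⟩, fun h => ⟨⟨has.trans_le h.1, h.2⟩, h.1⟩⟩

lemma setIntegral_indicator_le_snd [NormedSpace ℝ E] {a t s : ℝ} (hs : s ∈ Ioc a t)
    (F : ℝ × ℝ → E) :
    ∫ τ in Ioc a t, {p : ℝ × ℝ | p.2 ≤ p.1}.indicator F (τ, s) = ∫ τ in s..t, F (τ, s) := by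
  change ∫ τ in Ioc a t, (Ici s).indicator (fun τ => F (τ, s)) τ = _
  rw [setIntegral_indicator measurableSet_Ici, Ioc_inter_Ici_of_lt hs.1,
    integral_Icc_eq_integral_Ioc, intervalIntegral.integral_of_le hs.2]

lemma setIntegral_indicator_le_fst [NormedSpace ℝ E] {a t τ : ℝ} (hτ : τ ∈ Ioc a t)
    (F : ℝ × ℝ → E) :
    ∫ s in Ioc a t, {p : ℝ × ℝ | p.2 ≤ p.1}.indicator F (τ, s) = ∫ s in a..τ, F (τ, s) := by
  change ∫ s in Ioc a t, (Iic τ).indicator (fun s => F (τ, s)) s = _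
  rw [setIntegral_indicator measurableSet_Iic, Ioc_inter_Iic, min_eq_right hτ.2,
    intervalIntegral.integral_of_le hτ.1.le]

lemma intervalIntegral_swap_triangle [NormedSpace ℝ E] {a t : ℝ} (hat : a ≤ t) {F : ℝ × ℝ → E}
    (hF : Integrable ({p : ℝ × ℝ | p.2 ≤ p.1}.indicator F)
      ((volume.restrict (Ioc a t)).prod (volume.restrict (Ioc a t)))) :
    ∫ τ in a..t, ∫ s in a..τ, F (τ, s) = ∫ s in a..t, ∫ τ in s..t, F (τ, s) := by
  rw [intervalIntegral.integral_of_le hat, intervalIntegral.integral_of_le hat,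
    ← setIntegral_congr_fun measurableSet_Ioc fun _ hτ => setIntegral_indicator_le_fst hτ F,
    ← setIntegral_congr_fun measurableSet_Ioc fun _ hs => setIntegral_indicator_le_snd hs F]
  exact integral_integral_swap hF

lemma integrable_indicator_le_snd_iff {a t : ℝ} {s : ℝ} (hs : s ∈ Ioc a t) (F : ℝ × ℝ → E) :
    Integrable (fun τ => {p : ℝ × ℝ | p.2 ≤ p.1}.indicator F (τ, s)) (volume.restrict (Ioc a t))
      ↔ IntervalIntegrable (fun τ => F (τ, s)) volume s t := by
  change Integrable ((Ici s).indicator fun τ => F (τ, s)) _ ↔ _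
  rw [integrable_indicator_iff measurableSet_Ici, IntegrableOn,
    Measure.restrict_restrict measurableSet_Ici, inter_comm, Ioc_inter_Ici_of_lt hs.1,
    intervalIntegrable_iff_integrableOn_Icc_of_le hs.2, IntegrableOn]

end Fubini

section EssentiallyBounded

lemma memLp_top_of_continuousOn_Icc {E : Type*} [NormedAddCommGroup E] {a b : ℝ} {f : ℝ → E}
    (hf : ContinuousOn f (Icc a b)) : MemLp f ∞ (volume.restrict (Ioc a b)) := by
  obtain ⟨C, hC⟩ := isCompact_Icc.exists_bound_of_continuousOn hf
  refine memLp_top_of_bound ((hf.mono Ioc_subset_Icc_self).aestronglyMeasurable_of_isSeparable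
    measurableSet_Ioc (.of_separableSpace _)) C ?_
  filter_upwards [ae_restrict_mem measurableSet_Ioc] with t ht using hC t (Ioc_subset_Icc_self ht)

variable {a b α : ℝ} {f : ℝ → ℝ}

lemma memLp_top_of_ae_abs_le {M : ℝ} (hf : Measurable f)
    (hM : ∀ᵐ t ∂volume.restrict (Icc a b), |f t| ≤ M) : MemLp f ∞ (volume.restrict (Ioc a b)) := by
  refine memLp_top_of_bound hf.aestronglyMeasurable M ?_
  rwa [restrict_Ioc_eq_restrict_Icc]

lemma intervalIntegrable_sub_rpow_mul (hα : 0 < α) (hab : a ≤ b) (c : ℝ)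
    (hf : MemLp f ∞ (volume.restrict (Ioc a b))) :
    IntervalIntegrable (fun τ => (c - τ) ^ (α - 1) * f τ) volume a b := by
  rw [intervalIntegrable_iff_integrableOn_Ioc_of_le hab]
  exact Integrable.mul_of_top_left
    ((intervalIntegrable_iff_integrableOn_Ioc_of_le hab).1
      (intervalIntegrable_sub_rpow hα a b c)) hf

lemma intervalIntegrable_of_memLp_top {E : Type*} [NormedAddCommGroup E] {f : ℝ → E} (hab : a ≤ b)
    (hf : MemLp f ∞ (volume.restrict (Ioc a b))) : IntervalIntegrable f volume a b :=
  (intervalIntegrable_iff_integrableOn_Ioc_of_le hab).2 (hf.integrable le_top)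

end EssentiallyBounded

section RiemannLiouville

variable {a b s t α β r : ℝ} {f g : ℝ → ℝ}

lemma rlInt_zero_order (a : ℝ) (f : ℝ → ℝ) : rlInt a 0 f = f := by
  funext t
  simp only [rlInt, if_true]

lemma rlInt_of_ne_zero (hα : α ≠ 0) (a : ℝ) (f : ℝ → ℝ) (t : ℝ) :
    rlInt a α f t = 1 / Real.Gamma α * ∫ τ in a..t, (t - τ) ^ (α - 1) * f τ :=
  if_neg hα

lemma rlInt_one (a : ℝ) (f : ℝ → ℝ) (t : ℝ) : rlInt a 1 f t = ∫ τ in a..t, f τ := by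
  simp [rlInt_of_ne_zero]

lemma rlInt_self (hα : α ≠ 0) (a : ℝ) (f : ℝ → ℝ) : rlInt a α f a = 0 := by
  simp [rlInt_of_ne_zero hα]

lemma rlInt_congr (hat : a ≤ t) (h : EqOn f g (Icc a t)) : rlInt a α f t = rlInt a α g t := by
  unfold rlInt
  rw [h (right_mem_Icc.2 hat), intervalIntegral.integral_congr
    (g := fun τ => (t - τ) ^ (α - 1) * g τ) fun τ hτ => ?_]
  rw [uIcc_of_le hat] at hτ
  simp only [h hτ]

lemma rlInt_add (hα : 0 < α) (hat : a ≤ t) (hf : MemLp f ∞ (volume.restrict (Ioc a t)))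
    (hg : MemLp g ∞ (volume.restrict (Ioc a t))) :
    rlInt a α (fun τ => f τ + g τ) t = rlInt a α f t + rlInt a α g t := by
  simp only [rlInt_of_ne_zero hα.ne', mul_add]
  rw [intervalIntegral.integral_add (intervalIntegrable_sub_rpow_mul hα hat t hf)
    (intervalIntegrable_sub_rpow_mul hα hat t hg), mul_add]

lemma rlInt_const_mul (c : ℝ) (f : ℝ → ℝ) :
    rlInt a α (fun τ => c * f τ) t = c * rlInt a α f t := by
  unfold rlInt
  split_ifs
  · rfl
  · simp_rw [mul_left_comm _ c, intervalIntegral.integral_const_mul]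
    ring

lemma rlInt_finsetSum {κ : Type*} {J : Finset κ} {f : κ → ℝ → ℝ} (hα : 0 < α) (hat : a ≤ t)
    (hf : ∀ j ∈ J, MemLp (f j) ∞ (volume.restrict (Ioc a t))) :
    rlInt a α (fun τ => ∑ j ∈ J, f j τ) t = ∑ j ∈ J, rlInt a α (f j) t := by
  simp only [rlInt_of_ne_zero hα.ne', Finset.mul_sum]
  rw [intervalIntegral.integral_finsetSum fun j hj =>
    intervalIntegrable_sub_rpow_mul hα hat t (hf j hj), Finset.mul_sum]

lemma rlInt_sub (hα : 0 < α) (hat : a ≤ t) (hf : MemLp f ∞ (volume.restrict (Ioc a t)))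
    (hg : MemLp g ∞ (volume.restrict (Ioc a t))) :
    rlInt a α (fun τ => f τ - g τ) t = rlInt a α f t - rlInt a α g t := by
  simp only [rlInt_of_ne_zero hα.ne', mul_sub]
  rw [intervalIntegral.integral_sub (intervalIntegrable_sub_rpow_mul hα hat t hf)
    (intervalIntegrable_sub_rpow_mul hα hat t hg), mul_sub]

lemma abs_rlInt_le_of_ae_le (hα : 0 < α) (hat : a ≤ t) (hg : MemLp g ∞ (volume.restrict (Ioc a t)))
    (h : ∀ᵐ τ ∂volume.restrict (Ioc a t), |f τ| ≤ g τ) : |rlInt a α f t| ≤ rlInt a α g t := by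
  have hΓ := Real.Gamma_pos_of_pos hα
  rw [rlInt_of_ne_zero hα.ne', rlInt_of_ne_zero hα.ne', abs_mul,
    abs_of_pos (one_div_pos.2 hΓ)]
  gcongr
  rw [← Real.norm_eq_abs]
  refine intervalIntegral.norm_integral_le_of_norm_le hat ?_
    (intervalIntegrable_sub_rpow_mul hα hat t hg)
  filter_upwards [(ae_restrict_iff' measurableSet_Ioc).1 h] with τ hτ hmem
  have hker : 0 ≤ (t - τ) ^ (α - 1) := Real.rpow_nonneg (sub_nonneg.2 hmem.2) _
  rw [Real.norm_eq_abs, abs_mul, abs_of_nonneg hker]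
  exact mul_le_mul_of_nonneg_left (hτ hmem) hker

lemma rlInt_exp_le (hα : 0 < α) (hr : 0 < r) (hst : s ≤ t) :
    rlInt s α (fun τ => Real.exp (r * (τ - s))) t ≤ (1 / r) ^ α * Real.exp (r * (t - s)) := by
  have factor : ∀ τ, (t - τ) ^ (α - 1) * Real.exp (r * (τ - s))
      = Real.exp (r * (t - s)) * ((t - τ) ^ (α - 1) * Real.exp (-(r * (t - τ)))) := fun τ => by
    rw [mul_left_comm, ← Real.exp_add]
    ring_nf
  have := Real.Gamma_pos_of_pos hα
  simp_rw [rlInt_of_ne_zero hα.ne', factor, intervalIntegral.integral_const_mul]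
  calc 1 / Real.Gamma α * (Real.exp (r * (t - s)) *
        ∫ τ in s..t, (t - τ) ^ (α - 1) * Real.exp (-(r * (t - τ))))
      ≤ 1 / Real.Gamma α * (Real.exp (r * (t - s)) * ((1 / r) ^ α * Real.Gamma α)) := by
        gcongr
        exact integral_sub_rpow_mul_exp_le hα hr hst
    _ = (1 / r) ^ α * Real.exp (r * (t - s)) := by field_simp

lemma rlInt_fubini (hα : 0 < α) (hat : a ≤ t) {G : ℝ × ℝ → ℝ}
    (hG : Integrable ({p : ℝ × ℝ | p.2 ≤ p.1}.indicator fun p => (t - p.1) ^ (α - 1) * G p)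
      ((volume.restrict (Ioc a t)).prod (volume.restrict (Ioc a t)))) :
    rlInt a α (fun τ => ∫ s in a..τ, G (τ, s)) t
      = ∫ s in a..t, rlInt s α (fun τ => G (τ, s)) t := by
  simp only [rlInt_of_ne_zero hα.ne', intervalIntegral.integral_const_mul]
  simp only [← intervalIntegral.integral_const_mul ((t - _) ^ (α - 1))]
  rw [intervalIntegral_swap_triangle hat hG]

lemma integrable_indicator_sub_rpow_mul (hα : 0 < α) (hat : a ≤ t) {G : ℝ × ℝ → ℝ}
    (hG : MemLp ({p : ℝ × ℝ | p.2 ≤ p.1}.indicator G) ∞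
      ((volume.restrict (Ioc a t)).prod (volume.restrict (Ioc a t)))) :
    Integrable ({p : ℝ × ℝ | p.2 ≤ p.1}.indicator fun p => (t - p.1) ^ (α - 1) * G p)
      ((volume.restrict (Ioc a t)).prod (volume.restrict (Ioc a t))) := by
  have hker : Integrable (fun p : ℝ × ℝ => (t - p.1) ^ (α - 1))
      ((volume.restrict (Ioc a t)).prod (volume.restrict (Ioc a t))) :=
    Integrable.comp_fst ((intervalIntegrable_iff_integrableOn_Ioc_of_le hat).1
      (intervalIntegrable_sub_rpow hα a t t)) _
  exact (hker.mul_of_top_left hG).congr (.of_forall fun p =>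
    (indicator_mul_right {p : ℝ × ℝ | p.2 ≤ p.1} (fun p => (t - p.1) ^ (α - 1)) G).symm)

lemma integrable_indicator_sub_rpow_mul_sub_rpow_mul (hα : 0 < α) (hβ : 0 < β) (hat : a ≤ t)
    (hf : AEStronglyMeasurable f (volume.restrict (Ioc a t)))
    (hint : IntervalIntegrable (fun s => (t - s) ^ (α + β - 1) * f s) volume a t) :
    Integrable ({p : ℝ × ℝ | p.2 ≤ p.1}.indicator
        fun p => (t - p.1) ^ (α - 1) * ((p.1 - p.2) ^ (β - 1) * f p.2))
      ((volume.restrict (Ioc a t)).prod (volume.restrict (Ioc a t))) := by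
  have hmeas : MeasurableSet {p : ℝ × ℝ | p.2 ≤ p.1} :=
    measurableSet_le measurable_snd measurable_fst
  have ae_lt : ∀ᵐ s ∂volume.restrict (Ioc a t), s ∈ Ioc a t ∧ s < t := by
    rw [← restrict_Ioo_eq_restrict_Ioc]
    filter_upwards [ae_restrict_mem measurableSet_Ioo] with s hs using ⟨⟨hs.1, hs.2.le⟩, hs.2⟩
  have hF : AEStronglyMeasurable
      (fun p : ℝ × ℝ => (t - p.1) ^ (α - 1) * ((p.1 - p.2) ^ (β - 1) * f p.2))
      ((volume.restrict (Ioc a t)).prod (volume.restrict (Ioc a t))) :=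
    (Measurable.aestronglyMeasurable (by fun_prop)).mul
      ((Measurable.aestronglyMeasurable (by fun_prop)).mul hf.comp_snd)
  refine (integrable_prod_iff' (hF.indicator hmeas)).2 ⟨?_, ?_⟩
  · filter_upwards [ae_lt] with s hs
    rw [integrable_indicator_le_snd_iff hs.1]
    simpa only [mul_assoc] using
      (intervalIntegrable_sub_rpow_mul_rpow_sub hα hβ hs.2).mul_const (f s)
  · refine (((intervalIntegrable_iff_integrableOn_Ioc_of_le hat).1 hint).norm.const_mul
      (Real.Gamma α * Real.Gamma β / Real.Gamma (α + β))).congr ?_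
    filter_upwards [ae_lt] with s hs
    simp only [norm_indicator_eq_indicator_norm]
    rw [setIntegral_indicator_le_snd hs.1
      (fun p => ‖(t - p.1) ^ (α - 1) * ((p.1 - p.2) ^ (β - 1) * f p.2)‖), norm_mul, ← mul_assoc,
      Real.norm_of_nonneg (Real.rpow_nonneg (sub_nonneg.2 hs.2.le) _),
      ← integral_sub_rpow_mul_rpow_sub hα hβ hs.2, ← intervalIntegral.integral_mul_const]
    refine intervalIntegral.integral_congr fun τ hτ => ?_
    rw [uIcc_of_le hs.2.le] at hτ
    simp only [norm_mul, Real.norm_of_nonneg (Real.rpow_nonneg (sub_nonneg.2 hτ.1) _),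
      Real.norm_of_nonneg (Real.rpow_nonneg (sub_nonneg.2 hτ.2) _), mul_assoc]

lemma rlInt_sub_rpow (hα : 0 < α) (hβ : 0 < β) (hst : s < t) :
    rlInt s α (fun τ => (τ - s) ^ (β - 1)) t
      = Real.Gamma β / Real.Gamma (α + β) * (t - s) ^ (α + β - 1) := by
  have := (Real.Gamma_pos_of_pos hα).ne'
  rw [rlInt_of_ne_zero hα.ne', integral_sub_rpow_mul_rpow_sub hα hβ hst]
  field_simp

theorem rlInt_rlInt (hα : 0 ≤ α) (hβ : 0 ≤ β) (hat : a ≤ t)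
    (hf : AEStronglyMeasurable f (volume.restrict (Ioc a t)))
    (hint : IntervalIntegrable (fun s => (t - s) ^ (α + β - 1) * f s) volume a t) :
    rlInt a α (rlInt a β f) t = rlInt a (α + β) f t := by
  obtain rfl | hα := hα.eq_or_lt
  · rw [rlInt_zero_order, zero_add]
  obtain rfl | hβ := hβ.eq_or_lt
  · rw [rlInt_zero_order, add_zero]
  have hΓβ := (Real.Gamma_pos_of_pos hβ).ne'
  calc rlInt a α (rlInt a β f) t
      = 1 / Real.Gamma β *
          rlInt a α (fun τ => ∫ s in a..τ, (τ - s) ^ (β - 1) * f s) t := by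
        rw [← rlInt_const_mul]
        exact rlInt_congr hat fun τ _ => rlInt_of_ne_zero hβ.ne' a f τ
    _ = 1 / Real.Gamma β * ∫ s in a..t, rlInt s α (fun τ => f s * (τ - s) ^ (β - 1)) t := by
        rw [rlInt_fubini hα hat (G := fun p => (p.1 - p.2) ^ (β - 1) * f p.2)
          (integrable_indicator_sub_rpow_mul_sub_rpow_mul hα hβ hat hf hint)]
        simp only [mul_comm (f _)]
    _ = 1 / Real.Gamma β * ∫ s in a..t,
          Real.Gamma β / Real.Gamma (α + β) * ((t - s) ^ (α + β - 1) * f s) := by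
        rw [intervalIntegral.integral_of_le hat, intervalIntegral.integral_of_le hat,
          integral_Ioc_eq_integral_Ioo, integral_Ioc_eq_integral_Ioo]
        congr 1
        refine setIntegral_congr_fun measurableSet_Ioo fun s hs => ?_
        simp only [rlInt_const_mul, rlInt_sub_rpow hα hβ hs.2]
        ring
    _ = rlInt a (α + β) f t := by
        rw [rlInt_of_ne_zero (add_pos hα hβ).ne', intervalIntegral.integral_const_mul]
        field_simp

lemma rlInt_rlInt_of_memLp_top (hα : 0 ≤ α) (hβ : 0 ≤ β) (hαβ : 0 < α + β) (hat : a ≤ t)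
    (hf : MemLp f ∞ (volume.restrict (Ioc a t))) :
    rlInt a α (rlInt a β f) t = rlInt a (α + β) f t :=
  rlInt_rlInt hα hβ hat hf.1 (intervalIntegrable_sub_rpow_mul hαβ hat t hf)

end RiemannLiouville

section Regularity

variable {a b t α β M : ℝ} {f : ℝ → ℝ}

lemma abs_integral_sub_rpow_mul_le (hα : 0 < α) (htb : t ≤ b)
    (hM : ∀ᵐ τ ∂volume.restrict (Ioc t b), |f τ| ≤ M) :
    |∫ τ in t..b, (b - τ) ^ (α - 1) * f τ| ≤ M * ((b - t) ^ α / α) := by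
  have bound : ∀ᵐ τ, τ ∈ Ioc t b → ‖(b - τ) ^ (α - 1) * f τ‖ ≤ M * (b - τ) ^ (α - 1) := by
    filter_upwards [(ae_restrict_iff' measurableSet_Ioc).1 hM] with τ hτ hmem
    have hker : 0 ≤ (b - τ) ^ (α - 1) := Real.rpow_nonneg (sub_nonneg.2 hmem.2) _
    rw [norm_mul, Real.norm_of_nonneg hker, Real.norm_eq_abs, mul_comm]
    exact mul_le_mul_of_nonneg_right (hτ hmem) hker
  have h := intervalIntegral.norm_integral_le_of_norm_le htb bound
    ((intervalIntegrable_sub_rpow hα t b b).const_mul M)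
  rwa [Real.norm_eq_abs, intervalIntegral.integral_const_mul, integral_sub_rpow hα, sub_self,
    Real.zero_rpow hα.ne', sub_zero] at h

lemma abs_integral_sub_rpow_sub_mul_le (hα : 0 < α) (hα1 : α ≤ 1) (hat : a ≤ t) (htb : t ≤ b)
    (hM0 : 0 ≤ M) (hM : ∀ᵐ τ ∂volume.restrict (Ioc a t), |f τ| ≤ M) :
    |∫ τ in a..t, ((b - τ) ^ (α - 1) - (t - τ) ^ (α - 1)) * f τ| ≤ M * ((b - t) ^ α / α) := by
  have bound : ∀ᵐ τ, τ ∈ Ioc a t → ‖((b - τ) ^ (α - 1) - (t - τ) ^ (α - 1)) * f τ‖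
      ≤ M * ((t - τ) ^ (α - 1) - (b - τ) ^ (α - 1)) := by
    filter_upwards [(ae_restrict_iff' measurableSet_Ioc).1 hM, volume.ae_ne t] with τ hτ hne hmem
    have hker : (b - τ) ^ (α - 1) ≤ (t - τ) ^ (α - 1) :=
      Real.rpow_le_rpow_of_nonpos (sub_pos.2 (lt_of_le_of_ne hmem.2 hne)) (by linarith)
        (by linarith)
    rw [norm_mul, Real.norm_of_nonpos (sub_nonpos.2 hker), neg_sub, Real.norm_eq_abs, mul_comm]
    exact mul_le_mul_of_nonneg_right (hτ hmem) (sub_nonneg.2 hker)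
  have hint := intervalIntegrable_sub_rpow hα a t
  refine (intervalIntegral.norm_integral_le_of_norm_le hat bound
    (((hint t).sub (hint b)).const_mul M)).trans ?_
  rw [intervalIntegral.integral_const_mul, intervalIntegral.integral_sub (hint t) (hint b),
    integral_sub_rpow hα, integral_sub_rpow hα, sub_self, Real.zero_rpow hα.ne', ← sub_div]
  have hmono : (t - a) ^ α ≤ (b - a) ^ α :=
    Real.rpow_le_rpow (sub_nonneg.2 hat) (by linarith) hα.le
  gcongr
  linarith

lemma abs_rlInt_sub_rlInt_le (hα : 0 < α) (hα1 : α ≤ 1) (hat : a ≤ t) (htb : t ≤ b)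
    (hf : MemLp f ∞ (volume.restrict (Ioc a b))) (hM0 : 0 ≤ M)
    (hM : ∀ᵐ τ ∂volume.restrict (Ioc a b), |f τ| ≤ M) :
    |rlInt a α f b - rlInt a α f t| ≤ 2 * M / (α * Real.Gamma α) * (b - t) ^ α := by
  have hΓ := Real.Gamma_pos_of_pos hα
  have past_sub : Ioc a t ⊆ Ioc a b := Ioc_subset_Ioc_right htb
  have recent_sub : Ioc t b ⊆ Ioc a b := Ioc_subset_Ioc_left hat
  have past_memLp := hf.mono_measure (Measure.restrict_mono_set volume past_sub)
  have recent_memLp := hf.mono_measure (Measure.restrict_mono_set volume recent_sub)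
  have hpast := intervalIntegrable_sub_rpow_mul hα hat b past_memLp
  have split : rlInt a α f b - rlInt a α f t = 1 / Real.Gamma α *
      ((∫ τ in a..t, ((b - τ) ^ (α - 1) - (t - τ) ^ (α - 1)) * f τ)
        + ∫ τ in t..b, (b - τ) ^ (α - 1) * f τ) := by
    rw [rlInt_of_ne_zero hα.ne', rlInt_of_ne_zero hα.ne',
      ← intervalIntegral.integral_add_adjacent_intervals hpast
        (intervalIntegrable_sub_rpow_mul hα htb b recent_memLp)]
    simp only [sub_mul]
    rw [intervalIntegral.integral_sub hpast (intervalIntegrable_sub_rpow_mul hα hat t past_memLp)]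
    ring
  calc |rlInt a α f b - rlInt a α f t|
      ≤ 1 / Real.Gamma α * (M * ((b - t) ^ α / α) + M * ((b - t) ^ α / α)) := by
        rw [split, abs_mul, abs_of_pos (one_div_pos.2 hΓ)]
        gcongr
        refine (abs_add_le _ _).trans (add_le_add ?_ ?_)
        · exact abs_integral_sub_rpow_sub_mul_le hα hα1 hat htb hM0
            (ae_restrict_of_ae_restrict_of_subset past_sub hM)
        · exact abs_integral_sub_rpow_mul_le hα htb
            (ae_restrict_of_ae_restrict_of_subset recent_sub hM)
    _ = 2 * M / (α * Real.Gamma α) * (b - t) ^ α := by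
        field_simp
        ring

theorem exists_holderOnWith_rlInt (hα : 0 < α) (hα1 : α ≤ 1)
    (hf : MemLp f ∞ (volume.restrict (Ioc a b))) :
    ∃ C, HolderOnWith C α.toNNReal (rlInt a α f) (Icc a b) := by
  set M := lpNorm f ∞ (volume.restrict (Ioc a b))
  have hM : ∀ᵐ τ ∂volume.restrict (Ioc a b), |f τ| ≤ M := ae_le_lpNorm_exponent_top hf
  have hM0 : 0 ≤ M := lpNorm_nonneg
  refine ⟨(2 * M / (α * Real.Gamma α)).toNNReal, fun x hx y hy => ?_⟩
  wlog hyx : y ≤ x generalizing x y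
  · rw [edist_comm, edist_comm x]
    exact this y hy x hx (le_of_not_ge hyx)
  have hsub : Ioc a x ⊆ Ioc a b := Ioc_subset_Ioc_right hx.2
  rw [edist_dist, edist_dist, Real.coe_toNNReal _ hα.le,
    ENNReal.ofReal_rpow_of_nonneg dist_nonneg hα.le, ← ENNReal.ofReal,
    ← ENNReal.ofReal_mul' (by positivity), Real.dist_eq, Real.dist_eq,
    abs_of_nonneg (sub_nonneg.2 hyx)]
  exact ENNReal.ofReal_le_ofReal (abs_rlInt_sub_rlInt_le hα hα1 hy.1 hyx
    (hf.mono_measure (Measure.restrict_mono_set volume hsub)) hM0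
    (ae_restrict_of_ae_restrict_of_subset hsub hM))

lemma continuousOn_rlInt (hα : 0 < α) (hα1 : α ≤ 1)
    (hf : MemLp f ∞ (volume.restrict (Ioc a b))) : ContinuousOn (rlInt a α f) (Icc a b) := by
  obtain ⟨C, hC⟩ := exists_holderOnWith_rlInt hα hα1 hf
  exact hC.continuousOn (Real.toNNReal_pos.2 hα)

lemma continuousOn_rlInt_of_continuousOn (hα : 0 ≤ α) (hα1 : α ≤ 1)
    (hf : ContinuousOn f (Icc a b)) : ContinuousOn (rlInt a α f) (Icc a b) := by
  obtain rfl | hα := hα.eq_or_lt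
  · rwa [rlInt_zero_order]
  · exact continuousOn_rlInt hα hα1 (memLp_top_of_continuousOn_Icc hf)

lemma memLp_top_rlInt (hα : 0 ≤ α) (hα1 : α ≤ 1)
    (hf : MemLp f ∞ (volume.restrict (Ioc a b))) :
    MemLp (rlInt a α f) ∞ (volume.restrict (Ioc a b)) := by
  obtain rfl | hα := hα.eq_or_lt
  · rwa [rlInt_zero_order]
  · exact memLp_top_of_continuousOn_Icc (continuousOn_rlInt hα hα1 hf)

end Regularity

section Gronwall

variable {ι : Type*} [Fintype ι] {α L : ι → ℝ}

lemma exists_pos_sum_mul_rpow_le_half (hα : ∀ i, 0 < α i) :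
    ∃ r > 0, ∑ i, L i * (1 / r) ^ α i ≤ 1 / 2 := by
  have tendsto_zero :
      Filter.Tendsto (fun r : ℝ => ∑ i, L i * (1 / r) ^ α i) Filter.atTop (nhds 0) := by
    have hterm i : Filter.Tendsto (fun r : ℝ => L i * (1 / r) ^ α i) Filter.atTop (nhds 0) := by
      have h := (tendsto_const_nhds.div_atTop Filter.tendsto_id (a := (1 : ℝ))).rpow_const
        (Or.inr (hα i).le)
      simpa [Real.zero_rpow (hα i).ne'] using h.const_mul (L i)
    simpa using tendsto_finsetSum Finset.univ fun i _ => hterm i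
  obtain ⟨r, hle, hpos⟩ := ((tendsto_zero.eventually_le_const (by norm_num : (0 : ℝ) < 1 / 2)).and
    (Filter.eventually_gt_atTop 0)).exists
  exact ⟨r, hpos, hle⟩

lemma rlInt_le_of_le_exp {α r s t U : ℝ} {u : ℝ → ℝ} (hα : 0 < α) (hr : 0 < r) (hst : s ≤ t)
    (hU : 0 ≤ U) (hu : ContinuousOn u (Icc s t))
    (hle : ∀ τ ∈ Icc s t, u τ ≤ U * Real.exp (r * (τ - s))) :
    rlInt s α u t ≤ U * ((1 / r) ^ α * Real.exp (r * (t - s))) := by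
  have := Real.Gamma_pos_of_pos hα
  calc rlInt s α u t ≤ rlInt s α (fun τ => U * Real.exp (r * (τ - s))) t := by
        rw [rlInt_of_ne_zero hα.ne', rlInt_of_ne_zero hα.ne']
        gcongr
        refine intervalIntegral.integral_mono_on hst
          (intervalIntegrable_sub_rpow_mul hα hst t (memLp_top_of_continuousOn_Icc hu))
          (intervalIntegrable_sub_rpow_mul hα hst t
            (memLp_top_of_continuousOn_Icc (by fun_prop))) fun τ hτ => ?_
        exact mul_le_mul_of_nonneg_left (hle τ hτ) (Real.rpow_nonneg (sub_nonneg.2 hτ.2) _)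
    _ ≤ U * ((1 / r) ^ α * Real.exp (r * (t - s))) := by
        rw [rlInt_const_mul]
        gcongr
        exact rlInt_exp_le hα hr hst

lemma le_two_mul_exp_of_le_add_sum_rlInt {r : ℝ} (hα : ∀ i, 0 < α i) (hL : ∀ i, 0 ≤ L i)
    (hr : 0 < r) (hLr : ∑ i, L i * (1 / r) ^ α i ≤ 1 / 2) {s b c : ℝ} {u : ℝ → ℝ} (hc : 0 ≤ c)
    (hu : ContinuousOn u (Icc s b))
    (hle : ∀ t ∈ Icc s b, u t ≤ c + ∑ i, L i * rlInt s (α i) u t) :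
    ∀ t ∈ Icc s b, u t ≤ 2 * c * Real.exp (r * (t - s)) := by
  intro t ht
  obtain ⟨t₀, ht₀, hmax⟩ := isCompact_Icc.exists_isMaxOn ⟨t, ht⟩
    (f := fun t => u t * Real.exp (-(r * (t - s)))) (hu.mul (by fun_prop))
  set U := u t₀ * Real.exp (-(r * (t₀ - s)))
  have unweight : ∀ τ, u τ = u τ * Real.exp (-(r * (τ - s))) * Real.exp (r * (τ - s)) :=
    fun τ => by rw [mul_assoc, ← Real.exp_add, neg_add_cancel, Real.exp_zero, mul_one]
  have hweight : ∀ τ ∈ Icc s b, u τ ≤ U * Real.exp (r * (τ - s)) := fun τ hτ =>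
    (unweight τ).trans_le (mul_le_mul_of_nonneg_right (hmax hτ) (Real.exp_pos _).le)
  suffices hU : U ≤ 2 * c from (hweight t ht).trans (by gcongr)
  by_contra! hlt
  have hU0 : 0 ≤ U := by linarith
  have hexp : 1 ≤ Real.exp (r * (t₀ - s)) :=
    Real.one_le_exp (mul_nonneg hr.le (sub_nonneg.2 ht₀.1))
  have hsub : Icc s t₀ ⊆ Icc s b := Icc_subset_Icc_right ht₀.2
  have hcontr : U * Real.exp (r * (t₀ - s)) ≤ (c + 1 / 2 * U) * Real.exp (r * (t₀ - s)) := by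
    calc U * Real.exp (r * (t₀ - s)) ≤ c + ∑ i, L i * rlInt s (α i) u t₀ :=
          (unweight t₀).symm.trans_le (hle t₀ ht₀)
      _ ≤ c + ∑ i, L i * (U * ((1 / r) ^ α i * Real.exp (r * (t₀ - s)))) := by
          gcongr with i
          · exact hL i
          · exact rlInt_le_of_le_exp (hα i) hr ht₀.1 hU0 (hu.mono hsub)
              fun τ hτ => hweight τ (hsub hτ)
      _ = c + (∑ i, L i * (1 / r) ^ α i) * U * Real.exp (r * (t₀ - s)) := by
          simp only [Finset.sum_mul]
          congr! 2
          ring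
      _ ≤ c * Real.exp (r * (t₀ - s)) + 1 / 2 * U * Real.exp (r * (t₀ - s)) := by
          gcongr
          exact le_mul_of_one_le_right hc hexp
      _ = (c + 1 / 2 * U) * Real.exp (r * (t₀ - s)) := by ring
  have := le_of_mul_le_mul_right hcontr (Real.exp_pos _)
  linarith

theorem exists_gronwall_rlInt (hα : ∀ i, 0 < α i) (hL : ∀ i, 0 ≤ L i) (T : ℝ) :
    ∃ K, 0 ≤ K ∧ ∀ ⦃s b c : ℝ⦄ ⦃u : ℝ → ℝ⦄, b - s ≤ T → 0 ≤ c → ContinuousOn u (Icc s b) →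
      (∀ t ∈ Icc s b, u t ≤ c + ∑ i, L i * rlInt s (α i) u t) → ∀ t ∈ Icc s b, u t ≤ K * c := by
  obtain ⟨r, hr, hLr⟩ := exists_pos_sum_mul_rpow_le_half (L := L) hα
  refine ⟨2 * Real.exp (r * T), by positivity, fun s b c u hT hc hu hle t ht => ?_⟩
  calc u t ≤ 2 * c * Real.exp (r * (t - s)) :=
        le_two_mul_exp_of_le_add_sum_rlInt hα hL hr hLr hc hu hle t ht
    _ ≤ 2 * c * Real.exp (r * T) := by
        gcongr
        linarith [ht.2]
    _ = 2 * Real.exp (r * T) * c := by ring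

end Gronwall

section AbelInversion

variable {a b t α : ℝ} {f g : ℝ → ℝ}

lemma rlInt_rlInt_one_sub (hα : 0 ≤ α) (hα1 : α ≤ 1) (hat : a ≤ t)
    (hf : MemLp f ∞ (volume.restrict (Ioc a t))) :
    rlInt a α (rlInt a (1 - α) f) t = ∫ τ in a..t, f τ := by
  rw [rlInt_rlInt_of_memLp_top hα (sub_nonneg.2 hα1) (by simp) hat hf, add_sub_cancel, rlInt_one]

lemma rlInt_one_sub_rlInt (hα : 0 ≤ α) (hα1 : α ≤ 1) (hat : a ≤ t)
    (hf : MemLp f ∞ (volume.restrict (Ioc a t))) :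
    rlInt a (1 - α) (rlInt a α f) t = ∫ τ in a..t, f τ := by
  rw [rlInt_rlInt_of_memLp_top (sub_nonneg.2 hα1) hα (by simp) hat hf, sub_add_cancel, rlInt_one]

lemma eqOn_Icc_of_integral_eq {E : Type*} [NormedAddCommGroup E] [NormedSpace ℝ E]
    [CompleteSpace E] {f g : ℝ → E} (hab : a < b) (hf : ContinuousOn f (Icc a b))
    (hg : ContinuousOn g (Icc a b)) (h : EqOn (fun t => ∫ τ in a..t, f τ)
      (fun t => ∫ τ in a..t, g τ) (Icc a b)) : EqOn f g (Icc a b) := by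
  intro t ht
  have : Fact (t ∈ Icc a b) := ⟨ht⟩
  have derivWithin_primitive {u : ℝ → E} (hu : ContinuousOn u (Icc a b)) :
      derivWithin (fun t => ∫ τ in a..t, u τ) (Icc a b) t = u t :=
    intervalIntegral.derivWithin_integral_right
      ((hu.mono (Icc_subset_Icc_right ht.2)).intervalIntegrable_of_Icc ht.1)
      (hu.stronglyMeasurableAtFilter_nhdsWithin measurableSet_Icc t) (hu t ht)
      (uniqueDiffOn_Icc hab t ht)
  rw [← derivWithin_primitive hf, ← derivWithin_primitive hg, derivWithin_congr h (h ht)]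

theorem eqOn_rlInt_of_rlInt_one_sub_eq (hα : 0 < α) (hα1 : α ≤ 1) (hab : a < b)
    (hf : ContinuousOn f (Icc a b)) (hg : MemLp g ∞ (volume.restrict (Ioc a b)))
    (h : EqOn (rlInt a (1 - α) f) (fun t => ∫ τ in a..t, g τ) (Icc a b)) :
    EqOn f (rlInt a α g) (Icc a b) := by
  refine eqOn_Icc_of_integral_eq hab hf (continuousOn_rlInt hα hα1 hg) fun t ht => ?_
  have hsub : Icc a t ⊆ Icc a b := Icc_subset_Icc_right ht.2
  have hgt := hg.mono_measure (Measure.restrict_mono_set volume (Ioc_subset_Ioc_right ht.2))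
  calc ∫ τ in a..t, f τ = rlInt a α (rlInt a (1 - α) f) t :=
        (rlInt_rlInt_one_sub hα.le hα1 ht.1 (memLp_top_of_continuousOn_Icc (hf.mono hsub))).symm
    _ = rlInt a α (rlInt a 1 g) t :=
        rlInt_congr ht.1 fun τ hτ => (h (hsub hτ)).trans (rlInt_one a g τ).symm
    _ = rlInt a 1 (rlInt a α g) t := by
        rw [rlInt_rlInt_of_memLp_top hα.le zero_le_one (by positivity) ht.1 hgt,
          rlInt_rlInt_of_memLp_top zero_le_one hα.le (by positivity) ht.1 hgt, add_comm]
    _ = ∫ τ in a..t, rlInt a α g τ := rlInt_one _ _ _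

lemma rlInt_one_sub_eq_of_ae_eq {c : ℝ} (hα : 0 < α) (hα1 : α ≤ 1) (hab : a < b)
    (hf : ContinuousOn f (Icc a b)) (hfa : f a = 0)
    (hg : MemLp g ∞ (volume.restrict (Ioc a b)))
    (h : ∀ᵐ t ∂volume.restrict (Icc a b), rlInt a (1 - α) f t = c + ∫ τ in a..t, g τ) :
    EqOn (rlInt a (1 - α) f) (fun t => ∫ τ in a..t, g τ) (Icc a b) := by
  have primitive_continuousOn : ContinuousOn (fun t => ∫ τ in a..t, g τ) (Icc a b) := by
    simpa only [← rlInt_one] using continuousOn_rlInt zero_lt_one le_rfl hg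
  have heq := Measure.eqOn_Icc_of_ae_eq volume hab.ne h
    (continuousOn_rlInt_of_continuousOn (sub_nonneg.2 hα1) (by linarith) hf)
    (continuousOn_const.add primitive_continuousOn)
  have rlInt_left : rlInt a (1 - α) f a = 0 := by
    by_cases h1 : 1 - α = 0
    · rw [h1, rlInt_zero_order, hfa]
    · exact rlInt_self h1 a f
  have hc : c = 0 := by
    simpa [rlInt_left] using (heq (left_mem_Icc.2 hab.le)).symm
  simpa only [hc, zero_add] using heq

end AbelInversion

section Volterra

variable {ι : Type*} {s : ℝ} {I J : Set ℝ} {α : ι → ℝ}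

/-- The fractional integral `I^α_{a+}` of a vector-valued function, with one order `α i` for each
component. -/
noncomputable def rlIntPi (a : ℝ) (α : ι → ℝ) (q : ℝ → ι → ℝ) (t : ℝ) : ι → ℝ :=
  fun i => rlInt a (α i) (fun τ => q τ i) t

/-- `q` is a continuous solution on `I` of the Volterra equation
`q = w + I^α_{s+}[F(q(·), ·)]`, the integral form of the Caputo Cauchy problem with initial value
`w` at time `s`. -/
def IsVolterraSol (s : ℝ) (I : Set ℝ) (α w : ι → ℝ) (F : (ι → ℝ) → ℝ → ι → ℝ)
    (q : ℝ → ι → ℝ) : Prop :=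
  ContinuousOn q I ∧ ∀ t ∈ I, q t = w + rlIntPi s α (fun τ => F (q τ) τ) t

variable {w : ι → ℝ} {F : (ι → ℝ) → ℝ → ι → ℝ} {q : ℝ → ι → ℝ}

lemma IsVolterraSol.mono (h : IsVolterraSol s I α w F q) (hJI : J ⊆ I) :
    IsVolterraSol s J α w F q :=
  ⟨h.1.mono hJI, fun t ht => h.2 t (hJI ht)⟩

lemma IsVolterraSol.congr {q' : ℝ → ι → ℝ} (h : IsVolterraSol s I α w F q) (hs : s ∈ I)
    (hI : I ⊆ Ici s) (hIord : I.OrdConnected) (hq' : EqOn q' q I) :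
    IsVolterraSol s I α w F q' := by
  refine ⟨h.1.congr hq', fun t ht => ?_⟩
  rw [hq' ht, h.2 t ht]
  exact congrArg (w + ·) (funext fun i => rlInt_congr (hI ht) fun τ hτ =>
    by simp only [hq' (hIord.out hs ht hτ)])

lemma continuousOn_of_forall_Icc {X : Type*} [TopologicalSpace X] {f : ℝ → X} {a : ℝ}
    (hI : I ⊆ Ici a) (hf : ∀ b ∈ I, ContinuousOn f (Icc a b)) : ContinuousOn f I := by
  refine continuousOn_of_locally_continuousOn fun x hx => ?_
  by_cases hmax : ∃ b ∈ I, x < b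
  · obtain ⟨b, hb, hxb⟩ := hmax
    exact ⟨Iio b, isOpen_Iio, hxb, (hf b hb).mono fun y hy => ⟨hI hy.1, hy.2.le⟩⟩
  · push Not at hmax
    exact ⟨univ, isOpen_univ, trivial, (hf x hx).mono fun y hy => ⟨hI hy.1, hmax y hy.1⟩⟩

lemma isVolterraSol_of_forall_Icc (hI : I ⊆ Ici s)
    (h : ∀ b ∈ I, IsVolterraSol s (Icc s b) α w F q) : IsVolterraSol s I α w F q :=
  ⟨continuousOn_of_forall_Icc hI fun b hb => (h b hb).1,
    fun t ht => (h t ht).2 t (right_mem_Icc.2 (hI ht))⟩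

end Volterra

section Caputo

variable {a : ℝ} {I : Set ℝ} {m : ℕ} {α qa : Fin m → ℝ} {F : (Fin m → ℝ) → ℝ → Fin m → ℝ}
  {q : ℝ → Fin m → ℝ}

lemma IsCaputoSol.isVolterraSol (h : IsCaputoSol a I α qa F q) (haI : a ∈ I) (hI : I ⊆ Ici a)
    (hIord : I.OrdConnected) (hα : ∀ i, 0 < α i ∧ α i ≤ 1)
    (hF : ∀ b ∈ I, MemLp (fun τ => F (q τ) τ) ∞ (volume.restrict (Ioc a b))) :
    IsVolterraSol a I α qa F q := by
  obtain ⟨hcont, hinit, hcaputo⟩ := h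
  refine ⟨hcont, fun t ht => funext fun i => ?_⟩
  suffices q t i - qa i = rlInt a (α i) (fun τ => F (q τ) τ i) t from sub_eq_iff_eq_add'.1 this
  have increment_left : q a i - qa i = 0 := by rw [hinit, sub_self]
  obtain rfl | hat := (mem_Ici.1 (hI ht)).eq_or_lt
  · rw [increment_left, rlInt_self (hα i).1.ne']
  obtain ⟨c, h, -, hprim, hFh⟩ := hcaputo i
  have hsub : Icc a t ⊆ I := hIord.out haI ht
  have increment_continuousOn : ContinuousOn (fun τ => q τ i - qa i) (Icc a t) :=
    ((continuousOn_pi.1 hcont i).mono hsub).sub continuousOn_const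
  refine eqOn_rlInt_of_rlInt_one_sub_eq (hα i).1 (hα i).2 hat increment_continuousOn
    ((hF t ht).eval i) (rlInt_one_sub_eq_of_ae_eq (c := c) (hα i).1 (hα i).2 hat
      increment_continuousOn increment_left ((hF t ht).eval i) ?_) (right_mem_Icc.2 hat.le)
  filter_upwards [ae_restrict_of_ae_restrict_of_subset hsub hprim,
    ae_restrict_mem measurableSet_Icc] with x hx hxmem
  rw [hx, intervalIntegral.integral_congr_ae_restrict]
  rw [uIoc_of_le hxmem.1]
  exact ae_restrict_of_ae_restrict_of_subset
    ((Ioc_subset_Icc_self.trans (Icc_subset_Icc_right hxmem.2)).trans hsub) hFh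

lemma IsVolterraSol.isCaputoSol (h : IsVolterraSol a I α qa F q) (haI : a ∈ I) (hI : I ⊆ Ici a)
    (hIord : I.OrdConnected) (hα : ∀ i, 0 < α i ∧ α i ≤ 1)
    (hF : ∀ b ∈ I, MemLp (fun τ => F (q τ) τ) ∞ (volume.restrict (Ioc a b))) :
    IsCaputoSol a I α qa F q := by
  refine ⟨h.1, funext fun i => ?_, fun i => ⟨0, fun τ => F (q τ) τ i, fun b hb => ?_, ?_, ?_⟩⟩
  · rw [h.2 a haI, Pi.add_apply, rlIntPi, rlInt_self (hα i).1.ne', add_zero]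
  · rw [integrableOn_Icc_iff_integrableOn_Ioc]
    exact ((hF b hb).eval i).integrable le_top
  · filter_upwards [ae_restrict_mem hIord.measurableSet] with t ht
    have increment_eq : EqOn (fun τ => q τ i - qa i) (rlInt a (α i) fun τ => F (q τ) τ i)
        (Icc a t) := fun τ hτ => by
      simp only [h.2 τ (hIord.out haI ht hτ), Pi.add_apply, add_sub_cancel_left, rlIntPi]
    rw [rlInt_congr (hI ht) increment_eq,
      rlInt_one_sub_rlInt (hα i).1.le (hα i).2 (hI ht) ((hF t ht).eval i), zero_add]
  · exact .of_forall fun t => rfl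

end Caputo

section LinearSystem

variable {ι : Type*} [Fintype ι]

lemma exists_ae_norm_mulVec_le {X : Type*} [MeasurableSpace X] {μ : Measure X}
    {A : X → Matrix ι ι ℝ} (hA : ∀ i j, MemLp (fun x => A x i j) ∞ μ) :
    ∃ L, 0 ≤ L ∧ ∀ᵐ x ∂μ, ∀ v, ‖A x *ᵥ v‖ ≤ L * ‖v‖ := by
  set M : ι → ι → ℝ := fun i j => lpNorm (fun x => A x i j) ∞ μ
  have hM0 : ∀ i j, 0 ≤ M i j := fun i j => lpNorm_nonneg
  have rowSum_nonneg : ∀ i, 0 ≤ ∑ j, M i j := fun i => Finset.sum_nonneg fun j _ => hM0 i j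
  have hL : 0 ≤ ∑ i, ∑ j, M i j := Finset.sum_nonneg fun i _ => rowSum_nonneg i
  have hM : ∀ᵐ x ∂μ, ∀ i j, ‖A x i j‖ ≤ M i j := by
    simp only [ae_all_iff]
    exact fun i j => ae_le_lpNorm_exponent_top (hA i j)
  refine ⟨∑ i, ∑ j, M i j, hL, ?_⟩
  filter_upwards [hM] with x hx v
  refine (pi_norm_le_iff_of_nonneg (mul_nonneg hL (norm_nonneg v))).2 fun i => ?_
  calc ‖∑ j, A x i j * v j‖ ≤ ∑ j, M i j * ‖v‖ :=
        norm_sum_le_of_le _ fun j _ => (norm_mul_le _ _).trans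
          (mul_le_mul (hx i j) (norm_le_pi_norm v j) (norm_nonneg _) (hM0 i j))
    _ = (∑ j, M i j) * ‖v‖ := (Finset.sum_mul ..).symm
    _ ≤ (∑ i, ∑ j, M i j) * ‖v‖ := mul_le_mul_of_nonneg_right
        (Finset.single_le_sum (fun i _ => rowSum_nonneg i) (Finset.mem_univ i)) (norm_nonneg v)

lemma aestronglyMeasurable_mulVec {X : Type*} [MeasurableSpace X] {μ : Measure X}
    {A : X → Matrix ι ι ℝ} {q : X → ι → ℝ}
    (hA : ∀ i j, AEStronglyMeasurable (fun x => A x i j) μ) (hq : AEStronglyMeasurable q μ) :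
    AEStronglyMeasurable (fun x => A x *ᵥ q x) μ :=
  (aemeasurable_pi_iff.2 fun i => Finset.aemeasurable_fun_sum _ fun j _ =>
    (hA i j).aemeasurable.mul (aemeasurable_pi_iff.1 hq.aemeasurable j)).aestronglyMeasurable

lemma memLp_top_mulVec {X : Type*} [MeasurableSpace X] {μ : Measure X} {A : X → Matrix ι ι ℝ}
    {q : X → ι → ℝ} (hA : ∀ i j, MemLp (fun x => A x i j) ∞ μ) (hq : MemLp q ∞ μ) :
    MemLp (fun x => A x *ᵥ q x) ∞ μ :=
  MemLp.of_eval fun i => memLp_finsetSum _ fun j _ => (hq.eval j).mul' (hA i j)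

lemma intervalIntegral_apply {a b : ℝ} {f : ℝ → ι → ℝ} (hf : IntervalIntegrable f volume a b)
    (i : ι) : (∫ s in a..b, f s) i = ∫ s in a..b, f s i :=
  ((ContinuousLinearMap.proj (R := ℝ) (φ := fun _ : ι => ℝ) i).intervalIntegral_comp_comm hf).symm

lemma mulVec_intervalIntegral_apply {a b : ℝ} {f : ℝ → ι → ℝ}
    (hf : IntervalIntegrable f volume a b) (M : Matrix ι ι ℝ) (i : ι) :
    (M *ᵥ ∫ s in a..b, f s) i = ∫ s in a..b, (M *ᵥ f s) i :=
  (((ContinuousLinearMap.proj i).comp M.mulVecLin.toContinuousLinearMap).intervalIntegral_comp_comm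
    hf).symm

variable {a b s t : ℝ} {α : ι → ℝ} {f g q q₁ q₂ : ℝ → ι → ℝ} {w w₁ w₂ : ι → ℝ}
  {A : ℝ → Matrix ι ι ℝ}

lemma memLp_top_mulVec_add (hA : ∀ i j, MemLp (fun t => A t i j) ∞ (volume.restrict (Ioc a b)))
    (hg : MemLp g ∞ (volume.restrict (Ioc a b))) (hq : ContinuousOn q (Icc a b)) :
    MemLp (fun t => A t *ᵥ q t + g t) ∞ (volume.restrict (Ioc a b)) :=
  (memLp_top_mulVec hA (memLp_top_of_continuousOn_Icc hq)).add hg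

lemma rlIntPi_add (hα : ∀ i, 0 < α i) (hat : a ≤ t) (hf : MemLp f ∞ (volume.restrict (Ioc a t)))
    (hg : MemLp g ∞ (volume.restrict (Ioc a t))) :
    rlIntPi a α (fun τ => f τ + g τ) t = rlIntPi a α f t + rlIntPi a α g t :=
  funext fun i => rlInt_add (hα i) hat (hf.eval i) (hg.eval i)

lemma rlIntPi_sub (hα : ∀ i, 0 < α i) (hat : a ≤ t) (hf : MemLp f ∞ (volume.restrict (Ioc a t)))
    (hg : MemLp g ∞ (volume.restrict (Ioc a t))) :
    rlIntPi a α (fun τ => f τ - g τ) t = rlIntPi a α f t - rlIntPi a α g t :=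
  funext fun i => rlInt_sub (hα i) hat (hf.eval i) (hg.eval i)

lemma memLp_top_rlIntPi (hα : ∀ i, 0 ≤ α i) (hα1 : ∀ i, α i ≤ 1)
    (hf : MemLp f ∞ (volume.restrict (Ioc a b))) :
    MemLp (rlIntPi a α f) ∞ (volume.restrict (Ioc a b)) :=
  MemLp.of_eval fun i => memLp_top_rlInt (hα i) (hα1 i) (hf.eval i)

lemma continuousOn_rlIntPi (hα : ∀ i, 0 < α i) (hα1 : ∀ i, α i ≤ 1)
    (hf : MemLp f ∞ (volume.restrict (Ioc a b))) : ContinuousOn (rlIntPi a α f) (Icc a b) :=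
  continuousOn_pi.2 fun i => continuousOn_rlInt (hα i) (hα1 i) (hf.eval i)

lemma rlIntPi_rlIntPi_one_sub (hα : ∀ i, 0 < α i) (hα1 : ∀ i, α i ≤ 1) (hat : a ≤ t)
    (hf : MemLp f ∞ (volume.restrict (Ioc a t))) :
    rlIntPi a α (rlIntPi a (fun i => 1 - α i) f) t = ∫ τ in a..t, f τ := by
  funext i
  exact (rlInt_rlInt_one_sub (hα i).le (hα1 i) hat (hf.eval i)).trans
    (intervalIntegral_apply (intervalIntegrable_of_memLp_top hat hf) i).symm

lemma norm_rlIntPi_le_sum {L : ℝ} {u : ℝ → ℝ} (hα : ∀ i, 0 < α i) (hat : a ≤ t) (hL : 0 ≤ L)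
    (hu : ContinuousOn u (Icc a t)) (hu0 : ∀ τ, 0 ≤ u τ)
    (h : ∀ᵐ τ ∂volume.restrict (Ioc a t), ‖f τ‖ ≤ L * u τ) :
    ‖rlIntPi a α f t‖ ≤ ∑ i, L * rlInt a (α i) u t := by
  have hu_memLp := memLp_top_of_continuousOn_Icc hu
  have term_nonneg : ∀ i, 0 ≤ L * rlInt a (α i) u t := fun i =>
    mul_nonneg hL ((abs_nonneg _).trans (abs_rlInt_le_of_ae_le (hα i) hat hu_memLp
      (.of_forall fun τ => (abs_of_nonneg (hu0 τ)).le)))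
  refine (pi_norm_le_iff_of_nonneg (Finset.sum_nonneg fun i _ => term_nonneg i)).2 fun i => ?_
  calc ‖rlIntPi a α f t i‖ ≤ rlInt a (α i) (fun τ => L * u τ) t := by
        refine abs_rlInt_le_of_ae_le (hα i) hat (hu_memLp.const_mul L) ?_
        filter_upwards [h] with τ hτ using (norm_le_pi_norm (f τ) i).trans hτ
    _ = L * rlInt a (α i) u t := rlInt_const_mul L u
    _ ≤ ∑ i, L * rlInt a (α i) u t :=
        Finset.single_le_sum (fun i _ => term_nonneg i) (Finset.mem_univ i)

theorem exists_norm_le_of_isVolterraSol (hα : ∀ i, 0 < α i)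
    (hA : ∀ i j, MemLp (fun t => A t i j) ∞ (volume.restrict (Ioc a b))) :
    ∃ K, 0 ≤ K ∧ ∀ ⦃s⦄, s ∈ Icc a b → ∀ ⦃w v⦄,
      IsVolterraSol s (Icc s b) α w (fun x t => A t *ᵥ x) v → ∀ t ∈ Icc s b, ‖v t‖ ≤ K * ‖w‖ := by
  obtain ⟨L, hL, hAL⟩ := exists_ae_norm_mulVec_le hA
  obtain ⟨K, hK, gronwall⟩ := exists_gronwall_rlInt (L := fun _ => L) hα (fun _ => hL) (b - a)
  refine ⟨K, hK, fun s hs w v ⟨hv, hveq⟩ => gronwall (sub_le_sub_left hs.1 b) (norm_nonneg w)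
    hv.norm fun t ht => ?_⟩
  have hsub : Ioc s t ⊆ Ioc a b := Ioc_subset_Ioc hs.1 ht.2
  calc ‖v t‖ ≤ ‖w‖ + ‖rlIntPi s α (fun τ => A τ *ᵥ v τ) t‖ := by
        rw [hveq t ht]
        exact norm_add_le _ _
    _ ≤ ‖w‖ + ∑ i, L * rlInt s (α i) (fun τ => ‖v τ‖) t := by
        gcongr
        refine norm_rlIntPi_le_sum hα ht.1 hL (hv.norm.mono (Icc_subset_Icc_right ht.2))
          (fun τ => norm_nonneg _) ?_
        filter_upwards [ae_restrict_of_ae_restrict_of_subset hsub hAL] with τ hτ using hτ _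

lemma IsVolterraSol.add (hα : ∀ i, 0 < α i)
    (hA : ∀ i j, MemLp (fun t => A t i j) ∞ (volume.restrict (Ioc a b)))
    (hg : MemLp g ∞ (volume.restrict (Ioc a b)))
    (h₁ : IsVolterraSol a (Icc a b) α w₁ (fun x t => A t *ᵥ x) q₁)
    (h₂ : IsVolterraSol a (Icc a b) α w₂ (fun x t => A t *ᵥ x + g t) q₂) :
    IsVolterraSol a (Icc a b) α (w₁ + w₂) (fun x t => A t *ᵥ x + g t)
      (fun t => q₁ t + q₂ t) := by
  have hF₁ := memLp_top_mulVec hA (memLp_top_of_continuousOn_Icc h₁.1)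
  have hF₂ := memLp_top_mulVec_add hA hg h₂.1
  refine ⟨h₁.1.add h₂.1, fun t ht => ?_⟩
  have hle : volume.restrict (Ioc a t) ≤ volume.restrict (Ioc a b) :=
    Measure.restrict_mono_set volume (Ioc_subset_Ioc_right ht.2)
  simp only [Matrix.mulVec_add, add_assoc]
  rw [rlIntPi_add hα ht.1 (hF₁.mono_measure hle) (hF₂.mono_measure hle), h₁.2 t ht, h₂.2 t ht]
  abel

lemma IsVolterraSol.sub (hα : ∀ i, 0 < α i)
    (hA : ∀ i j, MemLp (fun t => A t i j) ∞ (volume.restrict (Ioc a b)))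
    (hg : MemLp g ∞ (volume.restrict (Ioc a b)))
    (h₁ : IsVolterraSol a (Icc a b) α w₁ (fun x t => A t *ᵥ x + g t) q₁)
    (h₂ : IsVolterraSol a (Icc a b) α w₂ (fun x t => A t *ᵥ x + g t) q₂) :
    IsVolterraSol a (Icc a b) α (w₁ - w₂) (fun x t => A t *ᵥ x) (fun t => q₁ t - q₂ t) := by
  have hF₁ := memLp_top_mulVec_add hA hg h₁.1
  have hF₂ := memLp_top_mulVec_add hA hg h₂.1
  refine ⟨h₁.1.sub h₂.1, fun t ht => ?_⟩
  have hle : volume.restrict (Ioc a t) ≤ volume.restrict (Ioc a b) :=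
    Measure.restrict_mono_set volume (Ioc_subset_Ioc_right ht.2)
  have field_sub : ∀ τ, A τ *ᵥ (q₁ τ - q₂ τ) = A τ *ᵥ q₁ τ + g τ - (A τ *ᵥ q₂ τ + g τ) :=
    fun τ => by rw [Matrix.mulVec_sub, add_sub_add_right_eq_sub]
  simp only [field_sub]
  rw [rlIntPi_sub hα ht.1 (hF₁.mono_measure hle) (hF₂.mono_measure hle), h₁.2 t ht, h₂.2 t ht]
  abel

theorem IsVolterraSol.eqOn (hα : ∀ i, 0 < α i)
    (hA : ∀ i j, MemLp (fun t => A t i j) ∞ (volume.restrict (Ioc a b)))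
    (hg : MemLp g ∞ (volume.restrict (Ioc a b)))
    (h₁ : IsVolterraSol a (Icc a b) α w (fun x t => A t *ᵥ x + g t) q₁)
    (h₂ : IsVolterraSol a (Icc a b) α w (fun x t => A t *ᵥ x + g t) q₂) :
    EqOn q₁ q₂ (Icc a b) := by
  obtain ⟨K, -, bound⟩ := exists_norm_le_of_isVolterraSol hα hA
  intro t ht
  have h := bound (left_mem_Icc.2 (ht.1.trans ht.2)) (h₁.sub hα hA hg h₂) t ht
  rw [sub_self, norm_zero, mul_zero] at h
  exact sub_eq_zero.1 (norm_le_zero_iff.1 h)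

theorem IsVolterraSol.eqOn_of_ordConnected {I : Set ℝ} (haI : a ∈ I) (hI : I ⊆ Ici a)
    (hIord : I.OrdConnected) (hα : ∀ i, 0 < α i)
    (hA : ∀ b ∈ I, ∀ i j, MemLp (fun t => A t i j) ∞ (volume.restrict (Ioc a b)))
    (hg : ∀ b ∈ I, MemLp g ∞ (volume.restrict (Ioc a b)))
    (h₁ : IsVolterraSol a I α w (fun x t => A t *ᵥ x + g t) q₁)
    (h₂ : IsVolterraSol a I α w (fun x t => A t *ᵥ x + g t) q₂) : EqOn q₁ q₂ I := fun t ht =>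
  (h₁.mono (hIord.out haI ht)).eqOn hα (hA t ht) (hg t ht) (h₂.mono (hIord.out haI ht))
    (right_mem_Icc.2 (hI ht))

theorem isCaputoSol_iff_isVolterraSol {m : ℕ} {α qa : Fin m → ℝ} {I : Set ℝ}
    {A : ℝ → Matrix (Fin m) (Fin m) ℝ} {g q : ℝ → Fin m → ℝ} (haI : a ∈ I) (hI : I ⊆ Ici a)
    (hIord : I.OrdConnected) (hα : ∀ i, 0 < α i ∧ α i ≤ 1)
    (hA : ∀ b ∈ I, ∀ i j, MemLp (fun t => A t i j) ∞ (volume.restrict (Ioc a b)))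
    (hg : ∀ b ∈ I, MemLp g ∞ (volume.restrict (Ioc a b))) :
    IsCaputoSol a I α qa (fun x t => A t *ᵥ x + g t) q
      ↔ IsVolterraSol a I α qa (fun x t => A t *ᵥ x + g t) q := by
  have field_memLp (hq : ContinuousOn q I) (b : ℝ) (hb : b ∈ I) :=
    memLp_top_mulVec_add (hA b hb) (hg b hb) (hq.mono (hIord.out haI hb))
  exact ⟨fun h => h.isVolterraSol haI hI hIord hα (field_memLp h.1),
    fun h => h.isCaputoSol haI hI hIord hα (field_memLp h.1)⟩

end LinearSystem

section StateTransition

lemma memLp_top_integral_prod_right {X Y E : Type*} [MeasurableSpace X] [MeasurableSpace Y]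
    [NormedAddCommGroup E] [NormedSpace ℝ E] {μ : Measure X} {ν : Measure Y} [SFinite μ]
    [IsFiniteMeasure ν] {F : X × Y → E} (hF : MemLp F ∞ (μ.prod ν)) :
    MemLp (fun x => ∫ y, F (x, y) ∂ν) ∞ μ := by
  refine memLp_top_of_bound hF.1.integral_prod_right' (lpNorm F ∞ (μ.prod ν) * ν.real univ) ?_
  filter_upwards [Measure.ae_ae_of_ae_prod (ae_le_lpNorm_exponent_top hF)] with x hx
  exact norm_integral_le_of_norm_le_const hx

variable {ι : Type*} [Fintype ι]

/-- The Duhamel term `∫_a^t Z(t, s) B(s) ds`, the response of the system to the forcing `B` from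
zero initial data. -/
noncomputable def duhamel (a : ℝ) (Z : ℝ → ℝ → Matrix ι ι ℝ) (B : ℝ → ι → ℝ) (t : ℝ) : ι → ℝ :=
  ∫ s in a..t, Z t s *ᵥ B s

variable [DecidableEq ι] {a b t : ℝ} {α : ι → ℝ}
  {A : ℝ → Matrix ι ι ℝ} {B : ℝ → ι → ℝ} {Z : ℝ → ℝ → Matrix ι ι ℝ}

/-- `Z` is a left Caputo state-transition matrix of `A` on `[a, b]`: it is jointly measurable, and
on the triangle `a ≤ s ≤ t ≤ b` it is continuous in `t` and satisfies
`Z(t, s) = 1 + I^α_{s+}[A Z(·, s)](t)`, the order `α i` applying to the `i`-th row. -/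
structure IsStateTransition (a b : ℝ) (α : ι → ℝ) (A : ℝ → Matrix ι ι ℝ)
    (Z : ℝ → ℝ → Matrix ι ι ℝ) : Prop where
  measurable : ∀ i j, Measurable fun p : ℝ × ℝ => Z p.1 p.2 i j
  continuousOn : ∀ s ∈ Icc a b, ∀ i j, ContinuousOn (fun t => Z t s i j) (Icc s b)
  eq : ∀ s ∈ Icc a b, ∀ t ∈ Icc s b, ∀ i j,
    Z t s i j = (1 : Matrix ι ι ℝ) i j + rlInt s (α i) (fun τ => (A τ * Z τ s) i j) t

lemma IsStateTransition.mono {c : ℝ} (hZ : IsStateTransition a b α A Z) (hcb : c ≤ b) :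
    IsStateTransition a c α A Z where
  measurable := hZ.measurable
  continuousOn s hs i j :=
    (hZ.continuousOn s (Icc_subset_Icc_right hcb hs) i j).mono (Icc_subset_Icc_right hcb)
  eq s hs t ht := hZ.eq s (Icc_subset_Icc_right hcb hs) t (Icc_subset_Icc_right hcb ht)

lemma IsStateTransition.of_ordConnected {I : Set ℝ} (hI : I.OrdConnected) (ha : a ∈ I) (hb : b ∈ I)
    (measurable : ∀ i j, Measurable fun p : ℝ × ℝ => Z p.1 p.2 i j)
    (continuousOn : ∀ s ∈ I, ∀ i j, ContinuousOn (fun t => Z t s i j) (I ∩ Ici s))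
    (eq : ∀ s ∈ I, ∀ t ∈ I, s ≤ t → ∀ i j,
      Z t s i j = (1 : Matrix ι ι ℝ) i j + rlInt s (α i) (fun τ => (A τ * Z τ s) i j) t) :
    IsStateTransition a b α A Z where
  measurable := measurable
  continuousOn s hs i j := (continuousOn s (hI.out ha hb hs) i j).mono fun _ ht =>
    ⟨hI.out ha hb ⟨hs.1.trans ht.1, ht.2⟩, ht.1⟩
  eq s hs t ht := eq s (hI.out ha hb hs) t (hI.out ha hb ⟨hs.1.trans ht.1, ht.2⟩) ht.1

lemma IsStateTransition.isVolterraSol_mulVec (hZ : IsStateTransition a b α A Z)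
    (hα : ∀ i, 0 < α i) (hA : ∀ i j, MemLp (fun t => A t i j) ∞ (volume.restrict (Ioc a b)))
    {s : ℝ} (hs : s ∈ Icc a b) (w : ι → ℝ) :
    IsVolterraSol s (Icc s b) α w (fun x t => A t *ᵥ x) (fun t => Z t s *ᵥ w) := by
  refine ⟨continuousOn_pi.2 fun i => continuousOn_finsetSum _ fun j _ =>
    (hZ.continuousOn s hs i j).mul continuousOn_const, fun t ht => funext fun i => ?_⟩
  have entry_memLp : ∀ j, MemLp (fun τ => (A τ * Z τ s) i j) ∞ (volume.restrict (Ioc s t)) :=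
    fun j => memLp_finsetSum _ fun k _ => (memLp_top_of_continuousOn_Icc
      ((hZ.continuousOn s hs k j).mono (Icc_subset_Icc_right ht.2))).mul'
      ((hA i k).mono_measure (Measure.restrict_mono_set volume (Ioc_subset_Ioc hs.1 ht.2)))
  calc (Z t s *ᵥ w) i
      = ∑ j, ((1 : Matrix ι ι ℝ) i j * w j
          + w j * rlInt s (α i) (fun τ => (A τ * Z τ s) i j) t) := by
        refine Finset.sum_congr rfl fun j _ => ?_
        simp only [hZ.eq s hs t ht i j]
        ring
    _ = w i + rlInt s (α i) (fun τ => ∑ j, w j * (A τ * Z τ s) i j) t := by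
        rw [rlInt_finsetSum (hα i) ht.1 fun j _ => (entry_memLp j).const_mul (w j),
          Finset.sum_add_distrib]
        simp only [rlInt_const_mul]
        exact congrArg (· + _) (congrFun (Matrix.one_mulVec w) i)
    _ = (w + rlIntPi s α (fun τ => A τ *ᵥ (Z τ s *ᵥ w)) t) i := by
        simp only [Pi.add_apply, rlIntPi, Matrix.mulVec_mulVec, Matrix.mulVec, dotProduct, mul_comm]

lemma IsStateTransition.exists_norm_mulVec_le (hZ : IsStateTransition a b α A Z)
    (hα : ∀ i, 0 < α i) (hA : ∀ i j, MemLp (fun t => A t i j) ∞ (volume.restrict (Ioc a b))) :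
    ∃ K, 0 ≤ K ∧ ∀ s ∈ Icc a b, ∀ t ∈ Icc s b, ∀ w, ‖Z t s *ᵥ w‖ ≤ K * ‖w‖ := by
  obtain ⟨K, hK, bound⟩ := exists_norm_le_of_isVolterraSol hα hA
  exact ⟨K, hK, fun s hs t ht w => bound hs (hZ.isVolterraSol_mulVec hα hA hs w) t ht⟩

lemma IsStateTransition.intervalIntegrable_mulVec (hZ : IsStateTransition a b α A Z)
    (hα : ∀ i, 0 < α i) (hA : ∀ i j, MemLp (fun t => A t i j) ∞ (volume.restrict (Ioc a b)))
    (hB : MemLp B ∞ (volume.restrict (Ioc a b))) (ht : t ∈ Icc a b) :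
    IntervalIntegrable (fun s => Z t s *ᵥ B s) volume a t := by
  obtain ⟨K, -, bound⟩ := hZ.exists_norm_mulVec_le hα hA
  have hBt := hB.mono_measure (Measure.restrict_mono_set volume (Ioc_subset_Ioc_right ht.2))
  refine (intervalIntegrable_iff_integrableOn_Ioc_of_le ht.1).2
    (MemLp.integrable le_top (hBt.of_le_mul (c := K) ?_ ?_))
  · exact aestronglyMeasurable_mulVec (fun i j =>
      ((hZ.measurable i j).comp measurable_prodMk_left).aestronglyMeasurable) hBt.1
  · filter_upwards [ae_restrict_mem measurableSet_Ioc] with s hs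
    exact bound s ⟨hs.1.le, hs.2.trans ht.2⟩ t ⟨hs.2, ht.2⟩ _

lemma IsStateTransition.duhamel_apply (hZ : IsStateTransition a b α A Z)
    (hα : ∀ i, 0 < α i) (hA : ∀ i j, MemLp (fun t => A t i j) ∞ (volume.restrict (Ioc a b)))
    (hB : MemLp B ∞ (volume.restrict (Ioc a b))) (hab : a ≤ b) (i : ι) :
    duhamel a Z B b i = ∫ s in a..b, ∑ j, Z b s i j * B s j :=
  intervalIntegral_apply (hZ.intervalIntegrable_mulVec hα hA hB (right_mem_Icc.2 hab)) i

lemma IsStateTransition.memLp_top_indicator_mulVec (hZ : IsStateTransition a b α A Z)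
    (hα : ∀ i, 0 < α i) (hA : ∀ i j, MemLp (fun t => A t i j) ∞ (volume.restrict (Ioc a b)))
    (hB : MemLp B ∞ (volume.restrict (Ioc a b))) :
    MemLp ({p : ℝ × ℝ | p.2 ≤ p.1}.indicator fun p => Z p.1 p.2 *ᵥ B p.2) ∞
      ((volume.restrict (Ioc a b)).prod (volume.restrict (Ioc a b))) := by
  obtain ⟨K, hK, bound⟩ := hZ.exists_norm_mulVec_le hα hA
  have hB_snd := hB.comp_snd (volume.restrict (Ioc a b))
  refine hB_snd.of_le_mul (c := K) ((aestronglyMeasurable_mulVec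
    (fun i j => (hZ.measurable i j).aestronglyMeasurable) hB_snd.1).indicator
    (measurableSet_le measurable_snd measurable_fst)) ?_
  rw [Measure.prod_restrict]
  filter_upwards [ae_restrict_mem (measurableSet_Ioc.prod measurableSet_Ioc)] with p ⟨hp₁, hp₂⟩
  by_cases hp : p.2 ≤ p.1
  · rw [indicator_of_mem (show p ∈ {p : ℝ × ℝ | p.2 ≤ p.1} from hp)]
    exact bound p.2 (Ioc_subset_Icc_self hp₂) p.1 ⟨hp, hp₁.2⟩ _
  · rw [indicator_of_notMem (show p ∉ {p : ℝ × ℝ | p.2 ≤ p.1} from hp), norm_zero]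
    positivity

lemma IsStateTransition.memLp_top_duhamel (hZ : IsStateTransition a b α A Z)
    (hα : ∀ i, 0 < α i) (hA : ∀ i j, MemLp (fun t => A t i j) ∞ (volume.restrict (Ioc a b)))
    (hB : MemLp B ∞ (volume.restrict (Ioc a b))) :
    MemLp (duhamel a Z B) ∞ (volume.restrict (Ioc a b)) := by
  refine (memLp_top_integral_prod_right (hZ.memLp_top_indicator_mulVec hα hA hB)).ae_eq ?_
  filter_upwards [ae_restrict_mem measurableSet_Ioc] with t ht
  exact setIntegral_indicator_le_fst ht fun p => Z p.1 p.2 *ᵥ B p.2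

lemma IsStateTransition.rlInt_mulVec_duhamel (hZ : IsStateTransition a b α A Z)
    (hα : ∀ i, 0 < α i) (hA : ∀ i j, MemLp (fun t => A t i j) ∞ (volume.restrict (Ioc a b)))
    (hB : MemLp B ∞ (volume.restrict (Ioc a b))) (hab : a ≤ b) (i : ι) :
    rlInt a (α i) (fun τ => (A τ *ᵥ duhamel a Z B τ) i) b
      = ∫ s in a..b, rlInt s (α i) (fun τ => (A τ *ᵥ (Z τ s *ᵥ B s)) i) b := by
  have triangle_memLp : MemLp ({p : ℝ × ℝ | p.2 ≤ p.1}.indicator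
      fun p => (A p.1 *ᵥ (Z p.1 p.2 *ᵥ B p.2)) i) ∞
      ((volume.restrict (Ioc a b)).prod (volume.restrict (Ioc a b))) := by
    convert (memLp_top_mulVec (fun i j => (hA i j).comp_fst (volume.restrict (Ioc a b)))
      (hZ.memLp_top_indicator_mulVec hα hA hB)).eval i using 2 with p
    by_cases hp : p.2 ≤ p.1 <;> simp [hp]
  rw [← rlInt_fubini (hα i) hab (G := fun p => (A p.1 *ᵥ (Z p.1 p.2 *ᵥ B p.2)) i)
    (integrable_indicator_sub_rpow_mul (hα i) hab triangle_memLp)]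
  exact rlInt_congr hab fun τ hτ =>
    mulVec_intervalIntegral_apply (hZ.intervalIntegrable_mulVec hα hA hB hτ) (A τ) i

lemma IsStateTransition.duhamel_eq (hZ : IsStateTransition a b α A Z)
    (hα : ∀ i, 0 < α i) (hA : ∀ i j, MemLp (fun t => A t i j) ∞ (volume.restrict (Ioc a b)))
    (hB : MemLp B ∞ (volume.restrict (Ioc a b))) (hab : a ≤ b) :
    duhamel a Z B b
      = (∫ s in a..b, B s) + rlIntPi a α (fun τ => A τ *ᵥ duhamel a Z B τ) b := by
  funext i
  have state_eq : EqOn (fun s => rlInt s (α i) (fun τ => (A τ *ᵥ (Z τ s *ᵥ B s)) i) b)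
      (fun s => (Z b s *ᵥ B s - B s) i) (uIcc a b) := fun s hs => by
    rw [uIcc_of_le hab] at hs
    have h := (hZ.isVolterraSol_mulVec hα hA hs (B s)).2 b (right_mem_Icc.2 hs.2)
    exact congrFun (sub_eq_iff_eq_add'.2 h).symm i
  have hZB := hZ.intervalIntegrable_mulVec hα hA hB (right_mem_Icc.2 hab)
  have hB_int := intervalIntegrable_of_memLp_top hab hB
  rw [Pi.add_apply, rlIntPi, hZ.rlInt_mulVec_duhamel hα hA hB hab,
    intervalIntegral.integral_congr state_eq, ← intervalIntegral_apply (hZB.sub hB_int),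
    intervalIntegral.integral_sub hZB hB_int, ← Pi.add_apply, add_sub_cancel, duhamel]

theorem IsStateTransition.isVolterraSol_duhamel (hZ : IsStateTransition a b α A Z)
    (hα : ∀ i, 0 < α i) (hα1 : ∀ i, α i ≤ 1)
    (hA : ∀ i j, MemLp (fun t => A t i j) ∞ (volume.restrict (Ioc a b)))
    (hB : MemLp B ∞ (volume.restrict (Ioc a b))) :
    IsVolterraSol a (Icc a b) α 0 (fun x t => A t *ᵥ x + rlIntPi a (fun i => 1 - α i) B t)
      (duhamel a Z B) := by
  have hg := memLp_top_rlIntPi (fun i => sub_nonneg.2 (hα1 i))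
    (fun i => sub_le_self 1 (hα i).le) hB
  have hAP := memLp_top_mulVec hA (hZ.memLp_top_duhamel hα hA hB)
  have volterra_eq : EqOn (duhamel a Z B) (rlIntPi a α fun τ =>
      A τ *ᵥ duhamel a Z B τ + rlIntPi a (fun i => 1 - α i) B τ) (Icc a b) := fun t ht => by
    have hle : volume.restrict (Ioc a t) ≤ volume.restrict (Ioc a b) :=
      Measure.restrict_mono_set volume (Ioc_subset_Ioc_right ht.2)
    rw [rlIntPi_add hα ht.1 (hAP.mono_measure hle) (hg.mono_measure hle),
      rlIntPi_rlIntPi_one_sub hα hα1 ht.1 (hB.mono_measure hle), add_comm]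
    exact (hZ.mono ht.2).duhamel_eq hα (fun i j => (hA i j).mono_measure hle)
      (hB.mono_measure hle) ht.1
  exact ⟨(continuousOn_rlIntPi hα hα1 (hAP.add hg)).congr volterra_eq,
    fun t ht => (volterra_eq ht).trans (zero_add _).symm⟩

theorem isVolterraSol_mulVec_add_duhamel {I : Set ℝ} (hI : I ⊆ Ici a) (hα : ∀ i, 0 < α i)
    (hα1 : ∀ i, α i ≤ 1)
    (hA : ∀ b ∈ I, ∀ i j, MemLp (fun t => A t i j) ∞ (volume.restrict (Ioc a b)))
    (hB : ∀ b ∈ I, MemLp B ∞ (volume.restrict (Ioc a b)))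
    (hZ : ∀ b ∈ I, IsStateTransition a b α A Z) (w : ι → ℝ) :
    IsVolterraSol a I α w (fun x t => A t *ᵥ x + rlIntPi a (fun i => 1 - α i) B t)
      (fun t => Z t a *ᵥ w + duhamel a Z B t) := by
  refine isVolterraSol_of_forall_Icc hI fun b hb => ?_
  simpa only [add_zero] using IsVolterraSol.add hα (hA b hb)
    (memLp_top_rlIntPi (fun i => sub_nonneg.2 (hα1 i)) (fun i => sub_le_self 1 (hα i).le) (hB b hb))
    ((hZ b hb).isVolterraSol_mulVec hα (hA b hb) (left_mem_Icc.2 (hI hb)) w)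
    ((hZ b hb).isVolterraSol_duhamel hα hα1 (hA b hb) (hB b hb))

end StateTransition

theorem statement19 (a : ℝ) (I : Set ℝ)
    (haI : a ∈ I) (hIsub : I ⊆ Set.Ici a) (hIint : (interior I).Nonempty)
    (hIord : I.OrdConnected)
    (m : ℕ) (hm : 0 < m)
    (α : Fin m → ℝ) (hα : ∀ i, 0 < α i ∧ α i ≤ 1)
    (qa : Fin m → ℝ)
    (A : ℝ → Matrix (Fin m) (Fin m) ℝ) (B : ℝ → Fin m → ℝ)
    -- `A` and `B` are measurable and locally essentially bounded on `I`
    (hAmeas : ∀ i j, Measurable fun t => A t i j)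
    (hAbdd : ∀ b ∈ I, ∃ M : ℝ,
      ∀ᵐ t ∂(volume.restrict (Set.Icc a b)), ∀ i j, |A t i j| ≤ M)
    (hBmeas : ∀ i, Measurable fun t => B t i)
    (hBbdd : ∀ b ∈ I, ∃ M : ℝ,
      ∀ᵐ t ∂(volume.restrict (Set.Icc a b)), ∀ i, |B t i| ≤ M)
    (cZ : ℝ → ℝ → Matrix (Fin m) (Fin m) ℝ)
    (hcZmeas : ∀ i j, Measurable fun p : ℝ × ℝ => cZ p.1 p.2 i j)
    (hcZcont : ∀ s ∈ I, ∀ i j, ContinuousOn (fun t => cZ t s i j) (I ∩ Set.Ici s))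
    -- `cZ` satisfies the left Caputo state-transition integral equation
    (hcZeq : ∀ s ∈ I, ∀ t ∈ I, s ≤ t → ∀ i j,
      cZ t s i j = (if i = j then (1:ℝ) else 0)
        + (1 / Real.Gamma (α i)) *
            ∫ τ in s..t, (t - τ) ^ (α i - 1) * ∑ k, A τ i k * cZ τ s k j)
    (q₂ : ℝ → Fin m → ℝ)
    -- `q₂` is given by the Duhamel-type formula with `cZ` in both terms
    (hq₂ : ∀ t ∈ I, ∀ i,
      q₂ t i = (∑ j, cZ t a i j * qa j) + ∫ s in a..t, ∑ j, cZ t s i j * B s j) :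
    (∀ t ∈ I, ∀ i,
      q₂ t i = qa i + (1 / Real.Gamma (α i)) *
        ∫ τ in a..t, (t - τ) ^ (α i - 1) *
          ((∑ j, A τ i j * q₂ τ j) + rlInt a (1 - α i) (fun s => B s i) τ)) ∧
    IsCaputoSol a I α qa
      (fun x t i => (∑ j, A t i j * x j) + rlInt a (1 - α i) (fun s => B s i) t) q₂ ∧
    ∀ q' : ℝ → Fin m → ℝ,
      IsCaputoSol a I α qa
        (fun x t i => (∑ j, A t i j * x j) + rlInt a (1 - α i) (fun s => B s i) t) q' →
      ∀ t ∈ I, q' t = q₂ t := by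
  have hα0 : ∀ i, 0 < α i := fun i => (hα i).1
  have hA : ∀ b ∈ I, ∀ i j, MemLp (fun t => A t i j) ∞ (volume.restrict (Ioc a b)) :=
    fun b hb i j => (hAbdd b hb).elim fun _ hM =>
      memLp_top_of_ae_abs_le (hAmeas i j) (hM.mono fun _ h => h i j)
  have hB : ∀ b ∈ I, MemLp B ∞ (volume.restrict (Ioc a b)) := fun b hb => .of_eval fun i =>
    (hBbdd b hb).elim fun _ hM => memLp_top_of_ae_abs_le (hBmeas i) (hM.mono fun _ h => h i)
  have hIB : ∀ b ∈ I, MemLp (rlIntPi a (fun i => 1 - α i) B) ∞ (volume.restrict (Ioc a b)) :=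
    fun b hb => memLp_top_rlIntPi (fun i => sub_nonneg.2 (hα i).2)
      (fun i => sub_le_self 1 (hα0 i).le) (hB b hb)
  have hZ : ∀ b ∈ I, IsStateTransition a b α A cZ := fun b hb =>
    .of_ordConnected hIord haI hb hcZmeas hcZcont fun s hs t ht hst i j =>
      (hcZeq s hs t ht hst i j).trans (congrArg _ (rlInt_of_ne_zero (hα0 i).ne' _ _ _).symm)
  have q₂_volterra := (isVolterraSol_mulVec_add_duhamel hIsub hα0 (fun i => (hα i).2) hA hB hZ
    qa).congr haI hIsub hIord fun t ht => funext fun i => (hq₂ t ht i).trans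
      (congrArg _ ((hZ t ht).duhamel_apply hα0 (hA t ht) (hB t ht) (hIsub ht) i).symm)
  have caputo_iff {q} := isCaputoSol_iff_isVolterraSol (qa := qa) (q := q) haI hIsub hIord hα hA hIB
  exact ⟨fun t ht i => (congrFun (q₂_volterra.2 t ht) i).trans
      (congrArg _ (rlInt_of_ne_zero (hα0 i).ne' _ _ _)),
    caputo_iff.2 q₂_volterra, fun q' hq' t ht =>
      (caputo_iff.1 hq').eqOn_of_ordConnected haI hIsub hIord hα0 hA hIB q₂_volterra ht⟩
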